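/- Fix p₀ ∈ (0, √2) and let (q, p) be the global solution of (HS) with initial datum (q(0), p(0)) = (0, p₀). Then q is periodic and admits a smallest positive period 𝒯(p₀); moreover q(t) > 0 for all t ∈ (0, 𝒯(p₀)/2) and q(t) < 0 for all t ∈ (𝒯(p₀)/2, 𝒯(p₀)). -/

import Mathlib

open Real Set Filter MeasureTheory
open scoped Topology

/-- The potential `g` from the Hamiltonian `H(x,p) = p²/2 + g(x)`. -/
noncomputable def g (x : ℝ) : ℝ := if |x| ≤ 1 then 1 - (1 - x ^ 2) ^ 4 else 1

/-- The derivative of `g`. -/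
noncomputable def g' (x : ℝ) : ℝ := if |x| ≤ 1 then 8 * x * (1 - x ^ 2) ^ 3 else 0

/-- `(q, p)` is a (global) solution of the Hamiltonian system (HS): `q̇ = p`, `ṗ = -g'(q)`. -/
def IsHSSol (q p : ℝ → ℝ) : Prop :=
  (∀ t : ℝ, HasDerivAt q (p t) t) ∧ (∀ t : ℝ, HasDerivAt p (-(g' (q t))) t)

/-- `F` is the flow of (HS): `F t q₀ p₀ = (q t, p t)` for the solution with data `(q₀, p₀)`. -/
def IsHSFlow (F : ℝ → ℝ → ℝ → ℝ × ℝ) : Prop :=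
  ∀ q₀ p₀ : ℝ,
    IsHSSol (fun t => (F t q₀ p₀).1) (fun t => (F t q₀ p₀).2) ∧ F 0 q₀ p₀ = (q₀, p₀)

/-- The set `([0,∞) × {2}) ∪ ({0} × (0,2])`, codomain of the map `Δ`. -/
def Dset : Set (ℝ × ℝ) := (Ici (0:ℝ) ×ˢ ({2} : Set ℝ)) ∪ ({(0:ℝ)} ×ˢ Ioc (0:ℝ) 2)

/-- `T` is the smallest positive period of `q`. -/
def IsSmallestPeriod (q : ℝ → ℝ) (T : ℝ) : Prop :=
  0 < T ∧ Function.Periodic q T ∧ ∀ T' : ℝ, 0 < T' → Function.Periodic q T' → T ≤ T'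

/-- `T` is the period map `𝒯`, assigning to `p₀ ∈ (0, √2)` the smallest positive period of
the `q`-component of the solution of (HS) with initial datum `(0, p₀)`. -/
def IsPeriodMap (F : ℝ → ℝ → ℝ → ℝ × ℝ) (T : ℝ → ℝ) : Prop :=
  ∀ p₀ ∈ Ioo (0:ℝ) (Real.sqrt 2), IsSmallestPeriod (fun t => (F t 0 p₀).1) (T p₀)

/-- `Δ` associates to `(t,x)` the datum in `Dset` whose orbit stays positive on `(0,t)`
and reaches `x` at time `t`. -/
def IsDeltaMap (F : ℝ → ℝ → ℝ → ℝ × ℝ) (Δ : ℝ → ℝ → ℝ × ℝ) : Prop :=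
  ∀ t x : ℝ, 0 < t → 0 < x →
    Δ t x ∈ Dset ∧ (F t (Δ t x).1 (Δ t x).2).1 = x ∧
      ∀ s ∈ Ioo (0:ℝ) t, 0 < (F s (Δ t x).1 (Δ t x).2).1

/-- The solution `u` of the conservation law built from the flow `F` and the map `Δ`
(extended by `0` at `x = 0`). -/
noncomputable def usol (F : ℝ → ℝ → ℝ → ℝ × ℝ) (Δ : ℝ → ℝ → ℝ × ℝ) (t x : ℝ) : ℝ :=
  if 0 < x then (F t (Δ t x).1 (Δ t x).2).2
  else if x < 0 then -(F t (Δ t (-x)).1 (Δ t (-x)).2).2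
  else 0

/-!
Conservation of energy gives `g (q t) ≤ p₀² / 2 < 1`, and on that sublevel set the restoring force
dominates that of a harmonic oscillator of frequency `ω = √(8 - 4 p₀²)`. Sturm comparison with this
oscillator forces `q` to return to `0` by the time `π / ω`. At the first return time `τ` the
momentum is `-p₀` by conservation of energy, so `t ↦ -q (t + τ)` solves the same initial value
problem as `q`, because the force is odd. Hence `q` is antiperiodic with antiperiod `τ`, and `2 τ`
is its smallest period because `q` is positive on `(0, τ)` and negative on `(τ, 2 τ)`.
-/

section RealFunctions

variable {q p r : ℝ → ℝ}

theorem eventually_pos_nhdsGT_of_hasDerivAt_pos {a m : ℝ} (hq : HasDerivAt q m a) (hm : 0 < m)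
    (hqa : q a = 0) : ∀ᶠ t in 𝓝[>] a, 0 < q t := by
  have hsign : ∀ᶠ t in 𝓝 a, SignType.sign (q t) = SignType.sign (t - a) :=
    eventually_nhdsWithin_sign_eq_of_deriv_pos (hq.deriv.symm ▸ hm) hqa
  filter_upwards [hsign.filter_mono nhdsWithin_le_nhds, self_mem_nhdsWithin] with t ht hat
  rwa [sign_pos (sub_pos.2 hat), sign_eq_one_iff] at ht

theorem hasDerivWithinAt_nonpos_of_eventually_ge {a m : ℝ} (hq : HasDerivWithinAt q m (Iio a) a)
    (hle : ∀ᶠ t in 𝓝[<] a, q a ≤ q t) : m ≤ 0 := by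
  refine le_of_tendsto ((hasDerivWithinAt_iff_tendsto_slope' self_notMem_Iio).1 hq) ?_
  filter_upwards [hle, self_mem_nhdsWithin] with t ht hta
  rw [slope_def_field]
  exact div_nonpos_of_nonneg_of_nonpos (sub_nonneg.2 ht) (sub_nonpos.2 (le_of_lt hta))

theorem exists_first_zero_of_eventually_pos {a b : ℝ} (hab : a < b) (hq : ContinuousOn q (Icc a b))
    (hpos : ∀ᶠ t in 𝓝[>] a, 0 < q t) (hb : q b ≤ 0) :
    ∃ τ ∈ Ioc a b, q τ = 0 ∧ ∀ t ∈ Ioo a τ, 0 < q t := by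
  obtain ⟨c, hac, hpos_ac⟩ := mem_nhdsGT_iff_exists_Ioo_subset.1 hpos
  have hcb : c ≤ b := not_lt.1 fun hbc => hb.not_gt (hpos_ac ⟨hab, hbc⟩)
  have hqc : ContinuousOn q (Icc c b) := hq.mono (Icc_subset_Icc_left (le_of_lt hac))
  obtain ⟨τ, ⟨⟨hcτ, hτb⟩, hqτ⟩, hτ_min⟩ :=
    (isCompact_Icc.of_isClosed_subset (hqc.preimage_isClosed_of_isClosed isClosed_Icc isClosed_Iic)
      inter_subset_left).exists_isLeast ⟨b, right_mem_Icc.2 hcb, hb⟩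
  have haτ : a < τ := lt_of_lt_of_le hac hcτ
  have hpos_aτ : ∀ t ∈ Ioo a τ, 0 < q t := fun t ⟨hat, htτ⟩ => by
    rcases lt_or_ge t c with htc | hct
    · exact hpos_ac ⟨hat, htc⟩
    · exact not_le.1 fun hqt => htτ.not_ge (hτ_min ⟨⟨hct, htτ.le.trans hτb⟩, hqt⟩)
  have hleft : Tendsto q (𝓝[Ioo a τ] τ) (𝓝 (q τ)) :=
    (hq τ ⟨haτ.le, hτb⟩).mono fun t ht => ⟨ht.1.le, ht.2.le.trans hτb⟩
  rw [nhdsWithin_Ioo_eq_nhdsLT haτ] at hleft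
  have hqτ_nonneg : 0 ≤ q τ := ge_of_tendsto hleft <| by
    filter_upwards [Ioo_mem_nhdsLT haτ] with t ht using (hpos_aτ t ht).le
  exact ⟨τ, ⟨haτ, hτb⟩, le_antisymm hqτ hqτ_nonneg, hpos_aτ⟩

/-- Sturm comparison: the Wronskian of `q` and `sin (ω t)` is antitone on `[0, π / ω]`, where it
goes from `-ω * q 0` to `ω * q (π / ω)`. -/
theorem apply_pi_div_le_neg_of_deriv_le_neg_sq_mul {ω : ℝ} (hω : 0 < ω)
    (hq : ∀ t, HasDerivAt q (p t) t) (hp : ∀ t, HasDerivAt p (r t) t)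
    (hr : ∀ t ∈ Ioo 0 (π / ω), r t ≤ -(ω ^ 2 * q t)) : q (π / ω) ≤ -q 0 := by
  let W : ℝ → ℝ := fun t => p t * sin (ω * t) - q t * (ω * cos (ω * t))
  have hW (t : ℝ) : HasDerivAt W ((r t + ω ^ 2 * q t) * sin (ω * t)) t := by
    have hωt : HasDerivAt (fun t => ω * t) ω t := by simpa using (hasDerivAt_id t).const_mul ω
    exact (((hp t).mul hωt.sin).sub ((hq t).mul (hωt.cos.const_mul ω))).congr_deriv (by ring)
  have hanti : AntitoneOn W (Icc 0 (π / ω)) := by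
    refine antitoneOn_of_hasDerivWithinAt_nonpos (convex_Icc _ _)
      (fun t _ => (hW t).continuousAt.continuousWithinAt)
      (fun t _ => (hW t).hasDerivWithinAt) fun t ht => ?_
    rw [interior_Icc] at ht
    have hωt : ω * t ≤ π := by
      rw [mul_comm]
      exact ((lt_div_iff₀ hω).1 ht.2).le
    exact mul_nonpos_of_nonpos_of_nonneg (by linarith [hr t ht])
      (sin_nonneg_of_nonneg_of_le_pi (mul_pos hω ht.1).le hωt)
  have hπω : 0 ≤ π / ω := by positivity
  have hW_le : W (π / ω) ≤ W 0 := hanti (left_mem_Icc.2 hπω) (right_mem_Icc.2 hπω) hπω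
  have hW_zero : W 0 = ω * -q 0 := by simp [W, mul_comm]
  have hW_pi : W (π / ω) = ω * q (π / ω) := by simp [W, mul_div_cancel₀ π hω.ne', mul_comm]
  rw [hW_zero, hW_pi] at hW_le
  exact le_of_mul_le_mul_left hW_le hω

end RealFunctions

section Antiperiodic

variable {q : ℝ → ℝ} {τ : ℝ}

theorem neg_on_Ioo_of_antiperiodic (hanti : Function.Antiperiodic q τ)
    (hpos : ∀ t ∈ Ioo 0 τ, 0 < q t) : ∀ t ∈ Ioo τ (2 * τ), q t < 0 := fun t ht => by
  have hq : 0 < q (t - τ) := hpos (t - τ) ⟨by linarith [ht.1], by linarith [ht.2]⟩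
  rw [hanti.sub_eq] at hq
  exact neg_pos.1 hq

theorem isSmallestPeriod_two_mul_of_antiperiodic (hτ : 0 < τ) (hanti : Function.Antiperiodic q τ)
    (hpos : ∀ t ∈ Ioo 0 τ, 0 < q t) : IsSmallestPeriod q (2 * τ) := by
  refine ⟨by positivity, hanti.periodic_two_mul, fun T hT hper => not_lt.1 fun hT_lt => ?_⟩
  -- A shift by `T < 2 * τ` moves some point of `(0, τ)` into `(τ, 2 * τ)`.
  obtain ⟨t, hlt, hgt⟩ : ∃ t, max 0 (τ - T) < t ∧ t < min τ (2 * τ - T) :=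
    exists_between <| max_lt (lt_min hτ (by linarith)) (lt_min (by linarith) (by linarith))
  rw [max_lt_iff] at hlt
  rw [lt_min_iff] at hgt
  have hqt : 0 < q t := hpos t ⟨hlt.1, hgt.1⟩
  have hqtT : q (t + T) < 0 :=
    neg_on_Ioo_of_antiperiodic hanti hpos (t + T) ⟨by linarith, by linarith⟩
  exact (hper t ▸ hqtT).not_gt hqt

end Antiperiodic

/-- `(q, p)` is a global solution of Newton's equation `q̇ = p`, `ṗ = -f(q)`, the setting of the
oscillation argument; the system (HS) is the case `f = g'`. The force is `-f`, so it is restoring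
where `f` has the sign of its argument. -/
def IsNewtonSol (f q p : ℝ → ℝ) : Prop :=
  (∀ t, HasDerivAt q (p t) t) ∧ ∀ t, HasDerivAt p (-f (q t)) t

namespace IsNewtonSol

variable {f G q p a b : ℝ → ℝ} {K : NNReal} {τ ω : ℝ}

theorem continuous (h : IsNewtonSol f q p) : Continuous q :=
  continuous_iff_continuousAt.2 fun t => (h.1 t).continuousAt

theorem comp_add_const (h : IsNewtonSol f q p) (τ : ℝ) :
    IsNewtonSol f (fun t => q (t + τ)) fun t => p (t + τ) :=
  ⟨fun t => (h.1 (t + τ)).comp_add_const t τ, fun t => (h.2 (t + τ)).comp_add_const t τ⟩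

theorem neg (h : IsNewtonSol f q p) (hf : f.Odd) :
    IsNewtonSol f (fun t => -q t) fun t => -p t :=
  ⟨fun t => (h.1 t).neg, fun t => hf (q t) ▸ (h.2 t).neg⟩

theorem energy_eq (h : IsNewtonSol f q p) (hG : ∀ x, HasDerivAt G (f x) x) (s t : ℝ) :
    p s ^ 2 / 2 + G (q s) = p t ^ 2 / 2 + G (q t) := by
  have hderiv (t : ℝ) : HasDerivAt (fun t => p t ^ 2 / 2 + G (q t)) 0 t :=
    ((((h.2 t).pow 2).div_const 2).add ((hG (q t)).comp t (h.1 t))).congr_deriv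
      (by push_cast; ring)
  exact is_const_of_deriv_eq_zero (fun t => (hderiv t).differentiableAt)
    (fun t => (hderiv t).deriv) s t

theorem unique (hf : LipschitzWith K f) (h : IsNewtonSol f q p) (h' : IsNewtonSol f a b)
    {t₀ : ℝ} (hq : q t₀ = a t₀) (hp : p t₀ = b t₀) : q = a ∧ p = b := by
  have hlip : LipschitzWith (max 1 K) fun z : ℝ × ℝ => (z.2, -f z.1) := by
    simpa using LipschitzWith.prod_snd.prodMk (hf.comp LipschitzWith.prod_fst).neg
  have heq : (fun t => (q t, p t)) = fun t => (a t, b t) :=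
    ODE_solution_unique_univ (v := fun _ z => (z.2, -f z.1)) (s := fun _ => univ)
      (fun _ => hlip.lipschitzOnWith) (fun t => ⟨(h.1 t).prodMk (h.2 t), mem_univ _⟩)
      (fun t => ⟨(h'.1 t).prodMk (h'.2 t), mem_univ _⟩) (Prod.ext hq hp)
  exact ⟨funext fun t => congrArg Prod.fst (congrFun heq t),
    funext fun t => congrArg Prod.snd (congrFun heq t)⟩

theorem exists_first_return (h : IsNewtonSol f q p) (hω : 0 < ω)
    (hfω : ∀ t, 0 < q t → ω ^ 2 * q t ≤ f (q t)) (hq0 : q 0 = 0) (hp0 : 0 < p 0) :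
    ∃ τ > 0, q τ = 0 ∧ ∀ t ∈ Ioo 0 τ, 0 < q t := by
  have hreturn : ∃ t > 0, q t ≤ 0 := by
    by_contra! hpos
    have hle : q (π / ω) ≤ -q 0 := apply_pi_div_le_neg_of_deriv_le_neg_sq_mul hω h.1 h.2
      fun t ht => neg_le_neg (hfω t (hpos t ht.1))
    exact (hle.trans_eq (by rw [hq0, neg_zero])).not_gt (hpos (π / ω) (by positivity))
  obtain ⟨b, hb, hqb⟩ := hreturn
  obtain ⟨τ, hτ, hqτ, hpos⟩ := exists_first_zero_of_eventually_pos hb h.continuous.continuousOn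
    (eventually_pos_nhdsGT_of_hasDerivAt_pos (h.1 0) hp0 hq0) hqb
  exact ⟨τ, hτ.1, hqτ, hpos⟩

theorem momentum_eq_neg_of_first_return (h : IsNewtonSol f q p)
    (hG : ∀ x, HasDerivAt G (f x) x) (hq0 : q 0 = 0) (hp0 : 0 < p 0) (hτ : 0 < τ)
    (hqτ : q τ = 0) (hpos : ∀ t ∈ Ioo 0 τ, 0 < q t) : p τ = -p 0 := by
  have hsq : p τ ^ 2 = p 0 ^ 2 := by
    have henergy := h.energy_eq hG τ 0
    rw [hqτ, hq0] at henergy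
    linarith
  have hpτ : p τ ≤ 0 := by
    refine hasDerivWithinAt_nonpos_of_eventually_ge (h.1 τ).hasDerivWithinAt ?_
    filter_upwards [Ioo_mem_nhdsLT hτ] with t ht
    exact hqτ.trans_le (hpos t ht).le
  exact (sq_eq_sq_iff_eq_or_eq_neg.1 hsq).resolve_left (hpτ.trans_lt hp0).ne

theorem antiperiodic (h : IsNewtonSol f q p) (hf : LipschitzWith K f) (hodd : f.Odd)
    (hqτ : q τ = -q 0) (hpτ : p τ = -p 0) : Function.Antiperiodic q τ := fun t => by
  have heq : q = fun t => -q (t + τ) :=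
    (unique hf h ((h.comp_add_const τ).neg hodd) (t₀ := 0) (by simp [hqτ]) (by simp [hpτ])).1
  rw [congrFun heq t, neg_neg]

theorem exists_antiperiodic (h : IsNewtonSol f q p) (hf : LipschitzWith K f) (hodd : f.Odd)
    (hG : ∀ x, HasDerivAt G (f x) x) (hω : 0 < ω)
    (hfω : ∀ t, 0 < q t → ω ^ 2 * q t ≤ f (q t)) (hq0 : q 0 = 0) (hp0 : 0 < p 0) :
    ∃ τ > 0, Function.Antiperiodic q τ ∧ ∀ t ∈ Ioo 0 τ, 0 < q t := by
  obtain ⟨τ, hτ, hqτ, hpos⟩ := h.exists_first_return hω hfω hq0 hp0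
  have hpτ : p τ = -p 0 := h.momentum_eq_neg_of_first_return hG hq0 hp0 hτ hqτ hpos
  exact ⟨τ, hτ, h.antiperiodic hf hodd (by rw [hqτ, hq0, neg_zero]) hpτ, hpos⟩

end IsNewtonSol

theorem hasDerivAt_posPart_pow (n : ℕ) (y : ℝ) :
    HasDerivAt (fun y : ℝ => y⁺ ^ (n + 2)) ((n + 2) * y⁺ ^ (n + 1)) y := by
  have hcont (k : ℕ) : Continuous fun y : ℝ => y⁺ ^ k := by
    simp only [posPart_def]
    fun_prop
  refine hasDerivAt_of_hasDerivAt_of_ne' (x := 0) (g := fun y : ℝ => (n + 2) * y⁺ ^ (n + 1))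
    (fun z hz => ?_) (hcont _).continuousAt ((hcont _).const_mul _).continuousAt y
  rcases hz.lt_or_gt with hneg | hpos
  · have heq : (fun y : ℝ => y⁺ ^ (n + 2)) =ᶠ[𝓝 z] fun _ => 0 := by
      filter_upwards [Iio_mem_nhds hneg] with y hy
      simp [posPart_of_nonpos (le_of_lt (mem_Iio.1 hy))]
    simpa [posPart_of_nonpos hneg.le] using (hasDerivAt_const z (0 : ℝ)).congr_of_eventuallyEq heq
  · have heq : (fun y : ℝ => y⁺ ^ (n + 2)) =ᶠ[𝓝 z] fun y => y ^ (n + 2) := by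
      filter_upwards [Ioi_mem_nhds hpos] with y hy
      rw [posPart_of_nonneg (le_of_lt (mem_Ioi.1 hy))]
    simpa [posPart_of_nonneg hpos.le] using (hasDerivAt_pow (n + 2) z).congr_of_eventuallyEq heq

theorem hasDerivAt_posPart_one_sub_sq_pow (n : ℕ) (x : ℝ) :
    HasDerivAt (fun x : ℝ => (1 - x ^ 2)⁺ ^ (n + 2))
      (-2 * (n + 2) * x * (1 - x ^ 2)⁺ ^ (n + 1)) x := by
  have hinner : HasDerivAt (fun x : ℝ => 1 - x ^ 2) (-(2 * x)) x := by
    simpa using (hasDerivAt_pow 2 x).const_sub 1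
  convert! (hasDerivAt_posPart_pow n (1 - x ^ 2)).comp x hinner using 1
  ring

theorem posPart_one_sub_sq_le_one (x : ℝ) : (1 - x ^ 2)⁺ ≤ 1 :=
  sup_le (by linarith [sq_nonneg x]) zero_le_one

theorem sq_mul_posPart_one_sub_sq_le_one (x : ℝ) : x ^ 2 * (1 - x ^ 2)⁺ ≤ 1 := by
  rcases le_total 0 (1 - x ^ 2) with hnonneg | hnonpos
  · rw [posPart_of_nonneg hnonneg]
    nlinarith [sq_nonneg x]
  · simp [posPart_of_nonpos hnonpos]

theorem g_eq_one_sub_posPart_pow (x : ℝ) : g x = 1 - (1 - x ^ 2)⁺ ^ 4 := by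
  unfold g
  simp only [← sq_le_one_iff_abs_le_one]
  split_ifs with hx
  · rw [posPart_of_nonneg (sub_nonneg.2 hx)]
  · simp [posPart_of_nonpos (sub_nonpos.2 (not_le.1 hx).le)]

theorem g'_eq_mul_posPart_pow (x : ℝ) : g' x = 8 * x * (1 - x ^ 2)⁺ ^ 3 := by
  unfold g'
  simp only [← sq_le_one_iff_abs_le_one]
  split_ifs with hx
  · rw [posPart_of_nonneg (sub_nonneg.2 hx)]
  · simp [posPart_of_nonpos (sub_nonpos.2 (not_le.1 hx).le)]

theorem g_zero : g 0 = 0 := by simp [g]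

theorem odd_g' : g'.Odd := fun x => by
  simp only [g'_eq_mul_posPart_pow, neg_sq]
  ring

theorem hasDerivAt_g (x : ℝ) : HasDerivAt g (g' x) x := by
  rw [funext g_eq_one_sub_posPart_pow, g'_eq_mul_posPart_pow]
  exact ((hasDerivAt_posPart_one_sub_sq_pow 2 x).const_sub 1).congr_deriv (by push_cast; ring)

theorem hasDerivAt_g' (x : ℝ) :
    HasDerivAt g' (8 * (1 - x ^ 2)⁺ ^ 3 - 48 * x ^ 2 * (1 - x ^ 2)⁺ ^ 2) x := by
  rw [funext g'_eq_mul_posPart_pow]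
  have hlinear : HasDerivAt (fun x : ℝ => 8 * x) 8 x := by
    simpa using (hasDerivAt_id x).const_mul 8
  exact (hlinear.mul (hasDerivAt_posPart_one_sub_sq_pow 1 x)).congr_deriv (by push_cast; ring)

theorem lipschitzWith_g' : LipschitzWith 48 g' := by
  refine lipschitzWith_of_nnnorm_deriv_le (fun x => (hasDerivAt_g' x).differentiableAt) fun x => ?_
  rw [← NNReal.coe_le_coe, coe_nnnorm, (hasDerivAt_g' x).deriv, Real.norm_eq_abs, abs_le]
  set m := (1 - x ^ 2)⁺
  have hm0 : 0 ≤ m := posPart_nonneg _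
  have hm1 : m ≤ 1 := posPart_one_sub_sq_le_one x
  have hm3 : m ^ 3 ≤ 1 := pow_le_one₀ hm0 hm1
  have hxm : x ^ 2 * m ^ 2 ≤ 1 := by
    rw [sq m, ← mul_assoc]
    exact mul_le_one₀ (sq_mul_posPart_one_sub_sq_le_one x) hm0 hm1
  have hm3_nonneg : 0 ≤ m ^ 3 := by positivity
  have hxm_nonneg : 0 ≤ x ^ 2 * m ^ 2 := by positivity
  rw [NNReal.coe_ofNat]
  constructor <;> linarith

theorem mul_one_sub_g_le_g' {x : ℝ} (hx : 0 ≤ x) : 8 * x * (1 - g x) ≤ g' x := by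
  rw [g_eq_one_sub_posPart_pow, g'_eq_mul_posPart_pow, sub_sub_cancel]
  exact mul_le_mul_of_nonneg_left
    (pow_le_pow_of_le_one (posPart_nonneg _) (posPart_one_sub_sq_le_one x) (by norm_num))
    (by positivity)

theorem IsHSSol.mul_le_g' {q p : ℝ → ℝ} (h : IsHSSol q p) (hq0 : q 0 = 0) {t : ℝ}
    (ht : 0 ≤ q t) : (8 - 4 * p 0 ^ 2) * q t ≤ g' (q t) := by
  have henergy : p t ^ 2 / 2 + g (q t) = p 0 ^ 2 / 2 := by
    simpa [hq0, g_zero] using IsNewtonSol.energy_eq h hasDerivAt_g t 0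
  have hg : g (q t) ≤ p 0 ^ 2 / 2 := by linarith [sq_nonneg (p t)]
  calc (8 - 4 * p 0 ^ 2) * q t = 8 * q t * (1 - p 0 ^ 2 / 2) := by ring
    _ ≤ 8 * q t * (1 - g (q t)) := by gcongr
    _ ≤ g' (q t) := mul_one_sub_g_le_g' ht

/-- Lemma ce3 (iii), first part: for `p₀ ∈ (0, √2)`, the `q`-component of the solution of
(HS) with datum `(0, p₀)` is periodic with a smallest positive period `𝒯(p₀)`; moreover
`q > 0` on `(0, 𝒯(p₀)/2)` and `q < 0` on `(𝒯(p₀)/2, 𝒯(p₀))`. -/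
theorem stmt_5 (p₀ : ℝ) (hp₀ : p₀ ∈ Ioo (0:ℝ) (Real.sqrt 2)) (q p : ℝ → ℝ)
    (hsol : IsHSSol q p) (hq0 : q 0 = 0) (hp0 : p 0 = p₀) :
    ∃ T : ℝ, IsSmallestPeriod q T ∧
      (∀ t ∈ Ioo (0:ℝ) (T / 2), 0 < q t) ∧
      (∀ t ∈ Ioo (T / 2) T, q t < 0) := by
  obtain ⟨hp₀_pos, hp₀_lt⟩ := hp₀
  subst hp0
  have hω : 0 < 8 - 4 * p 0 ^ 2 := by
    linarith [(lt_sqrt hp₀_pos.le).1 hp₀_lt]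
  obtain ⟨τ, hτ, hanti, hpos⟩ := IsNewtonSol.exists_antiperiodic hsol lipschitzWith_g' odd_g'
    hasDerivAt_g (sqrt_pos.2 hω)
    (fun t ht => (sq_sqrt hω.le).symm ▸ hsol.mul_le_g' hq0 ht.le) hq0 hp₀_pos
  refine ⟨2 * τ, isSmallestPeriod_two_mul_of_antiperiodic hτ hanti hpos, ?_⟩
  rw [mul_div_cancel_left₀ τ two_ne_zero]
  exact ⟨hpos, neg_on_Ioo_of_antiperiodic hanti hpos⟩
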